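/- Let A be a separable unital C*-algebra and let π : A → B(H) and ρ : A → B(K) be unital representations on separable infinite-dimensional Hilbert spaces H and K. Then π ≺ ρ if and only if π belongs to the closure, in the point-strong operator topology on Rep(A,H), of the set of all κ ∈ Rep(A,H) that are unitarily equivalent to ρ (i.e., κ = u ρ(·) u* for some unitary isomorphism u : K → H). -/

import Mathlib

open scoped InnerProductSpace

noncomputable section

/-- The space of unital representations of `A` on `H`, i.e. unital `*`-homomorphisms
`A → B(H)`. -/
abbrev CRep (A H : Type*) [CStarAlgebra A] [NormedAddCommGroup H]
    [InnerProductSpace ℂ H] [CompleteSpace H] : Type _ :=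
  A →⋆ₐ[ℂ] (H →L[ℂ] H)

/-- The point-strong operator topology on `CRep A H`: the topology of pointwise convergence
with `B(H)` carrying the strong operator topology (i.e. pointwise convergence on vectors). -/
instance CRep.instTopologicalSpace (A H : Type*) [CStarAlgebra A] [NormedAddCommGroup H]
    [InnerProductSpace ℂ H] [CompleteSpace H] : TopologicalSpace (CRep A H) :=
  TopologicalSpace.induced (fun π => (fun (a : A) (x : H) => π a x)) inferInstance

/-- The weak containment relation `π ≺ ρ`: for every finite set `Ω ⊆ A`, every finite
orthonormal family `ξ` in `H` and every `ε > 0` there is an orthonormal family `ζ` in `K`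
of the same size with `|⟨π(a)ξᵢ, ξᵢ⟩ − ⟨ρ(a)ζᵢ, ζᵢ⟩| < ε` for all `a ∈ Ω` and all `i`. -/
def CRepPrec {A H K : Type*} [CStarAlgebra A] [NormedAddCommGroup H]
    [InnerProductSpace ℂ H] [CompleteSpace H] [NormedAddCommGroup K]
    [InnerProductSpace ℂ K] [CompleteSpace K]
    (π : CRep A H) (ρ : CRep A K) : Prop :=
  ∀ (Ω : Finset A) (n : ℕ) (ξ : Fin n → H), Orthonormal ℂ ξ → ∀ ε : ℝ, 0 < ε →
    ∃ ζ : Fin n → K, Orthonormal ℂ ζ ∧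
      ∀ a ∈ Ω, ∀ i : Fin n, ‖⟪π a (ξ i), ξ i⟫_ℂ - ⟪ρ a (ζ i), ζ i⟫_ℂ‖ < ε

/-!
Convergence of all matrix coefficients `⟪y i, ρ a (y j)⟫` to those of `π` is convergence of Gram
matrices, so it can be realised by unitaries `K ≃ H`; hence it suffices to approximate in `ρ` the
matrix coefficients of a generating family of vectors of `π`. Such a family is built in two parts.
On the elements which `ρ` maps to finite-rank operators, `π ≺ ρ` bounds the rank of `π b` by that of
`ρ b` for every minimal projection `ρ b` (compare traces), and an isometry from the range of `π b`
to that of `ρ b` then preserves matrix coefficients exactly. A vector `v` orthogonal to this part is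
killed by all elements of finite rank, so by Glimm's lemma `a ↦ ⟪v, π a v⟫` is a limit of vector
functionals of `ρ` along vectors converging weakly to zero, which are asymptotically orthogonal to
any vectors chosen before.
-/

open Filter Topology InnerProductSpace

section Closure

variable {α β X : Type*} [TopologicalSpace X] {f : α → X} {x : X}

theorem mem_closure_range_iff_exists_tendsto :
    x ∈ closure (Set.range f) ↔ ∃ l : Filter α, l.NeBot ∧ Tendsto f l (𝓝 x) := by
  refine ⟨fun hx => ⟨comap f (𝓝 x), ?_, tendsto_comap⟩, fun ⟨l, _, hl⟩ =>
    mem_closure_of_tendsto hl (.of_forall Set.mem_range_self)⟩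
  rw [comap_neBot_iff_frequently]
  simpa only [Set.mem_range, mem_closure_iff_frequently] using hx

theorem neBot_curry {l : Filter α} {m : Filter β} [l.NeBot] [m.NeBot] : (l.curry m).NeBot := by
  simp only [neBot_iff, ne_eq, ← eventually_false_iff_eq_bot, eventually_curry_iff,
    eventually_const, not_false_eq_true]

end Closure

section Gram

variable {𝕜 E F α ι : Type*} [RCLike 𝕜] [NormedAddCommGroup E] [InnerProductSpace 𝕜 E]
  [NormedAddCommGroup F] [InnerProductSpace 𝕜 F] {l : Filter α}

theorem tendsto_norm_of_tendsto_inner_self {x : α → E} {c : ℝ}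
    (hx : Tendsto (fun t => ⟪x t, x t⟫_𝕜) l (𝓝 (c : 𝕜))) :
    Tendsto (fun t => ‖x t‖) l (𝓝 √c) := by
  have h := ((RCLike.continuous_re.tendsto _).comp hx).sqrt
  simpa [Function.comp_def, inner_self_eq_norm_sq] using h

theorem tendsto_norm_of_tendsto_sub {x y : α → E} {c : ℝ}
    (hxy : Tendsto (fun t => x t - y t) l (𝓝 0)) (hy : Tendsto (fun t => ‖y t‖) l (𝓝 c)) :
    Tendsto (fun t => ‖x t‖) l (𝓝 c) := by
  have h : Tendsto (fun t => ‖x t‖ - ‖y t‖) l (𝓝 0) :=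
    squeeze_zero_norm (fun t => abs_norm_sub_norm_le _ _) (by simpa using hxy.norm)
  simpa using h.add hy

section GramSchmidt

variable [LinearOrder ι] [LocallyFiniteOrderBot ι] [WellFoundedLT ι] {f : α → ι → E}

theorem tendsto_gramSchmidt_sub
    (hf : ∀ i j, Tendsto (fun t => ⟪f t i, f t j⟫_𝕜) l (𝓝 (if i = j then 1 else 0))) (i : ι) :
    Tendsto (fun t => gramSchmidt 𝕜 (f t) i - f t i) l (𝓝 0) := by
  have hnorm (i : ι) : Tendsto (fun t => ‖f t i‖) l (𝓝 1) := by
    simpa using tendsto_norm_of_tendsto_inner_self (𝕜 := 𝕜) (c := 1) (by simpa using hf i i)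
  induction i using WellFoundedLT.induction with
  | ind i ih =>
    have hcoeff (j : ι) (hj : j < i) :
        Tendsto (fun t => ⟪gramSchmidt 𝕜 (f t) j, f t i⟫_𝕜) l (𝓝 0) := by
      have h : Tendsto (fun t => ⟪gramSchmidt 𝕜 (f t) j - f t j, f t i⟫_𝕜) l (𝓝 0) :=
        squeeze_zero_norm (fun t => norm_inner_le_norm _ _)
          (by simpa using (ih j hj).norm.mul (hnorm i))
      simpa [inner_sub_left, hj.ne] using h.add (hf j i)
    have hterm (j : ι) (hj : j ∈ Finset.Iio i) :
        Tendsto (fun t => (⟪gramSchmidt 𝕜 (f t) j, f t i⟫_𝕜 /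
          (‖gramSchmidt 𝕜 (f t) j‖ : 𝕜) ^ 2) • gramSchmidt 𝕜 (f t) j) l (𝓝 0) := by
      rw [Finset.mem_Iio] at hj
      have hgnorm := tendsto_norm_of_tendsto_sub (ih j hj) (hnorm j)
      rw [tendsto_zero_iff_norm_tendsto_zero]
      simpa [norm_smul] using ((hcoeff j hj).norm.div (hgnorm.pow 2) (by simp)).mul hgnorm
    have hsum := (tendsto_finsetSum _ hterm).neg
    rw [Finset.sum_const_zero, neg_zero] at hsum
    refine hsum.congr fun t => ?_
    rw [neg_eq_iff_eq_neg, neg_sub, eq_sub_iff_add_eq']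
    exact (gramSchmidt_def'' 𝕜 (f t) i).symm

theorem tendsto_gramSchmidtNormed_sub
    (hf : ∀ i j, Tendsto (fun t => ⟪f t i, f t j⟫_𝕜) l (𝓝 (if i = j then 1 else 0))) (i : ι) :
    Tendsto (fun t => gramSchmidtNormed 𝕜 (f t) i - f t i) l (𝓝 0) := by
  have hnorm : Tendsto (fun t => ‖gramSchmidt 𝕜 (f t) i‖) l (𝓝 1) :=
    tendsto_norm_of_tendsto_sub (tendsto_gramSchmidt_sub hf i) <| by
      simpa using tendsto_norm_of_tendsto_inner_self (𝕜 := 𝕜) (c := 1) (by simpa using hf i i)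
  have hscale : Tendsto (fun t => ‖((‖gramSchmidt 𝕜 (f t) i‖ : 𝕜)⁻¹ - 1)‖ *
      ‖gramSchmidt 𝕜 (f t) i‖) l (𝓝 0) := by
    have h := ((RCLike.continuous_ofReal (K := 𝕜)).tendsto _).comp hnorm
    simpa using ((h.inv₀ (by simp)).sub_const 1).norm.mul hnorm
  have h := (tendsto_zero_iff_norm_tendsto_zero.2
    (hscale.congr fun t => (norm_smul _ _).symm)).add (tendsto_gramSchmidt_sub hf i)
  simpa [gramSchmidtNormed, sub_smul] using h

theorem eventually_orthonormal_gramSchmidtNormed [Finite ι]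
    (hf : ∀ i j, Tendsto (fun t => ⟪f t i, f t j⟫_𝕜) l (𝓝 (if i = j then 1 else 0))) :
    ∀ᶠ t in l, Orthonormal 𝕜 (gramSchmidtNormed 𝕜 (f t)) := by
  have hne (i : ι) : ∀ᶠ t in l, gramSchmidtNormed 𝕜 (f t) i ≠ 0 := by
    have hnorm := tendsto_norm_of_tendsto_sub (tendsto_gramSchmidtNormed_sub hf i) <|
      tendsto_norm_of_tendsto_inner_self (𝕜 := 𝕜) (c := 1) (by simpa using hf i i)
    simpa using hnorm.eventually_ne (b₂ := 0) (by simp)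
  filter_upwards [eventually_all.2 hne] with t ht
  refine ⟨fun i => gramSchmidtNormed_unit_length' (ht i), fun i j hij => ?_⟩
  simp [gramSchmidtNormed, inner_smul_left, inner_smul_right, gramSchmidt_orthogonal 𝕜 _ hij]

end GramSchmidt

theorem exists_linearIsometry_of_orthonormal {b : Module.Basis ι 𝕜 E} (hb : Orthonormal 𝕜 b)
    {w : ι → F} (hw : Orthonormal 𝕜 w) : ∃ L : E →ₗᵢ[𝕜] F, ∀ i, L (b i) = w i := by
  have h : ⇑(b.constr 𝕜 w) ∘ b = w := funext fun i => b.constr_basis 𝕜 w i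
  exact ⟨(b.constr 𝕜 w).isometryOfOrthonormal hb (h.symm ▸ hw), congrFun h⟩

theorem exists_linearIsometryEquiv_extend (S : Submodule 𝕜 E) [S.HasOrthogonalProjection]
    (T : S ≃ₗᵢ[𝕜] S) : ∃ u : E ≃ₗᵢ[𝕜] E, ∀ x : S, u x = T x := by
  refine ⟨S.orthogonalDecomposition.trans
    ((T.withLpProdCongr 2 (.refl 𝕜 Sᗮ)).trans S.orthogonalDecomposition.symm), fun x => ?_⟩
  rw [LinearIsometryEquiv.trans_apply, LinearIsometryEquiv.trans_apply,
    LinearIsometryEquiv.symm_apply_eq]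
  simp [S.orthogonalProjectionOnto_orthogonal_apply_eq_zero]

theorem exists_linearIsometryEquiv_of_orthonormal [Finite ι] (e : E ≃ₗᵢ[𝕜] F) {v : ι → E}
    {w : ι → F} (hv : Orthonormal 𝕜 v) (hw : Orthonormal 𝕜 w) :
    ∃ u : E ≃ₗᵢ[𝕜] F, ∀ i, u (v i) = w i := by
  have hw' : Orthonormal 𝕜 (e.symm ∘ w) := hw.comp_linearIsometryEquiv e.symm
  let S := Submodule.span 𝕜 (Set.range v ∪ Set.range (e.symm ∘ w))
  have : FiniteDimensional 𝕜 S :=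
    .span_of_finite 𝕜 ((Set.finite_range v).union (Set.finite_range _))
  let vS (i : ι) : S := ⟨v i, Submodule.subset_span (.inl ⟨i, rfl⟩)⟩
  let wS (i : ι) : S := ⟨e.symm (w i), Submodule.subset_span (.inr ⟨i, rfl⟩)⟩
  have hvS : Orthonormal 𝕜 vS := (S.subtypeₗᵢ.orthonormal_comp_iff).1 hv
  have hwS : Orthonormal 𝕜 wS := (S.subtypeₗᵢ.orthonormal_comp_iff).1 hw'
  let b := Module.Basis.span hvS.linearIndependent
  have hb (i : ι) : (b i : S) = vS i :=
    congrArg Subtype.val (Module.Basis.span_apply hvS.linearIndependent i)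
  obtain ⟨L, hL⟩ := exists_linearIsometry_of_orthonormal (b := b)
    (((Submodule.subtypeₗᵢ _).orthonormal_comp_iff).1 (by simpa [Function.comp_def, hb])) hwS
  obtain ⟨u, hu⟩ := exists_linearIsometryEquiv_extend S (L.extend.toLinearIsometryEquiv rfl)
  refine ⟨u.trans e, fun i => ?_⟩
  have hui : u (v i) = e.symm (w i) := by
    rw [show v i = vS i from rfl, hu, LinearIsometry.coe_toLinearIsometryEquiv, ← hb,
      LinearIsometry.extend_apply, hL]
  simp [hui]

theorem exists_linearIsometryEquiv_tendsto_of_orthonormal [LinearOrder ι]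
    [LocallyFiniteOrderBot ι] [WellFoundedLT ι] [Finite ι] (e : E ≃ₗᵢ[𝕜] F) {f : α → ι → E}
    (hf : ∀ i j, Tendsto (fun t => ⟪f t i, f t j⟫_𝕜) l (𝓝 (if i = j then 1 else 0)))
    {b : ι → F} (hb : Orthonormal 𝕜 b) :
    ∃ u : α → E ≃ₗᵢ[𝕜] F, ∀ i, Tendsto (fun t => u t (f t i)) l (𝓝 (b i)) := by
  have hunitary (t : α) : ∃ u : E ≃ₗᵢ[𝕜] F, Orthonormal 𝕜 (gramSchmidtNormed 𝕜 (f t)) →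
      ∀ i, u (gramSchmidtNormed 𝕜 (f t) i) = b i := by
    by_cases ht : Orthonormal 𝕜 (gramSchmidtNormed 𝕜 (f t))
    · exact (exists_linearIsometryEquiv_of_orthonormal e ht hb).imp fun _ hu _ => hu
    · exact ⟨e, fun h => (ht h).elim⟩
  choose u hu using hunitary
  refine ⟨u, fun i => ?_⟩
  rw [tendsto_iff_norm_sub_tendsto_zero]
  refine (tendsto_zero_iff_norm_tendsto_zero.1 (tendsto_gramSchmidtNormed_sub hf i)).congr' ?_
  filter_upwards [eventually_orthonormal_gramSchmidtNormed hf] with t ht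
  rw [← hu t ht, ← map_sub, LinearIsometryEquiv.norm_map, norm_sub_rev]

theorem tendsto_inner_linearCombination [Fintype ι] {g : ι → F} {h : α → ι → E}
    (hgh : ∀ i j, Tendsto (fun t => ⟪h t i, h t j⟫_𝕜) l (𝓝 ⟪g i, g j⟫_𝕜)) (c d : ι → 𝕜) :
    Tendsto (fun t => ⟪Fintype.linearCombination 𝕜 (h t) c,
      Fintype.linearCombination 𝕜 (h t) d⟫_𝕜) l
      (𝓝 ⟪Fintype.linearCombination 𝕜 g c, Fintype.linearCombination 𝕜 g d⟫_𝕜) := by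
  simp only [Fintype.linearCombination_apply, sum_inner, inner_sum, inner_smul_left,
    inner_smul_right, Finset.mul_sum]
  exact tendsto_finsetSum _ fun i _ => tendsto_finsetSum _ fun j _ =>
    ((hgh _ _).const_mul _).const_mul _

theorem exists_linearIsometryEquiv_tendsto_of_finite [Finite ι] (e : E ≃ₗᵢ[𝕜] F) {g : ι → F}
    {h : α → ι → E} (hgh : ∀ i j, Tendsto (fun t => ⟪h t i, h t j⟫_𝕜) l (𝓝 ⟪g i, g j⟫_𝕜)) :
    ∃ u : α → E ≃ₗᵢ[𝕜] F, ∀ i, Tendsto (fun t => u t (h t i)) l (𝓝 (g i)) := by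
  classical
  have := Fintype.ofFinite ι
  have hcomb := tendsto_inner_linearCombination hgh
  let S := Submodule.span 𝕜 (Set.range g)
  have : FiniteDimensional 𝕜 S := .span_of_finite 𝕜 (Set.finite_range g)
  let b := stdOrthonormalBasis 𝕜 S
  have hb : Orthonormal 𝕜 fun k => (b k : F) := b.orthonormal.comp_linearIsometry S.subtypeₗᵢ
  have hrange (k) : ∃ c, Fintype.linearCombination 𝕜 g c = b k :=
    (Submodule.mem_span_range_iff_exists_fun 𝕜).1 (b k).2
  choose c hc using hrange
  let f (t : α) (k) : E := Fintype.linearCombination 𝕜 (h t) (c k)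
  have hf (k k') : Tendsto (fun t => ⟪f t k, f t k'⟫_𝕜) l (𝓝 (if k = k' then 1 else 0)) := by
    simpa only [hc, orthonormal_iff_ite.1 hb] using hcomb (c k) (c k')
  obtain ⟨u, hu⟩ := exists_linearIsometryEquiv_tendsto_of_orthonormal e hf hb
  refine ⟨u, fun i => ?_⟩
  let r (k) : 𝕜 := ⟪b k, ⟨g i, Submodule.subset_span ⟨i, rfl⟩⟩⟫_𝕜
  have hgi : ∑ k, r k • (b k : F) = g i := by
    simpa [r] using congrArg Subtype.val (b.sum_repr' ⟨g i, Submodule.subset_span ⟨i, rfl⟩⟩)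
  let d : ι → 𝕜 := Pi.single i 1 - ∑ k, r k • c k
  have hd : Fintype.linearCombination 𝕜 g d = 0 := by simp [d, hc, hgi]
  have hker : Tendsto (fun t => u t (Fintype.linearCombination 𝕜 (h t) d)) l (𝓝 0) := by
    rw [tendsto_zero_iff_norm_tendsto_zero]
    simpa using tendsto_norm_of_tendsto_inner_self (𝕜 := 𝕜) (c := 0) (by simpa [hd] using hcomb d d)
  have h := hker.add (tendsto_finsetSum Finset.univ fun k _ => (hu k).const_smul (r k))
  rw [hgi, zero_add] at h
  refine h.congr fun t => ?_
  simp [d, f]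

theorem exists_linearIsometryEquiv_tendsto (e : E ≃ₗᵢ[𝕜] F) {g : ι → F} {h : α → ι → E}
    (hgh : ∀ i j, Tendsto (fun t => ⟪h t i, h t j⟫_𝕜) l (𝓝 ⟪g i, g j⟫_𝕜)) :
    ∃ u : Finset ι × α → E ≃ₗᵢ[𝕜] F, ∀ i,
      Tendsto (fun p => u p (h p.2 i)) ((atTop : Filter (Finset ι)).curry l) (𝓝 (g i)) := by
  have hfinite (s : Finset ι) : ∃ u : α → E ≃ₗᵢ[𝕜] F, ∀ i ∈ s,
      Tendsto (fun t => u t (h t i)) l (𝓝 (g i)) := by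
    obtain ⟨u, hu⟩ := exists_linearIsometryEquiv_tendsto_of_finite (ι := s) e
      (g := fun i => g i) (h := fun t i => h t i) fun i j => hgh i j
    exact ⟨u, fun i hi => hu ⟨i, hi⟩⟩
  choose u hu using hfinite
  refine ⟨fun p => u p.1 p.2, fun i => ?_⟩
  refine Tendsto.curry (f := fun s t => u s t (h t i)) ?_
  filter_upwards [eventually_ge_atTop {i}] with s hs
  exact hu s i (hs (Finset.mem_singleton_self i))

end Gram

section Dimension

open Module

theorem finrank_map_lt_of_mem_of_apply_eq_zero {k V W : Type*} [DivisionRing k] [AddCommGroup V]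
    [Module k V] [AddCommGroup W] [Module k W] {p : Submodule k V} [FiniteDimensional k p]
    {f : V →ₗ[k] W} {v : V} (hv : v ∈ p) (hv0 : v ≠ 0) (hf : f v = 0) :
    finrank k (p.map f) < finrank k p := by
  have : Nontrivial (LinearMap.ker (f.domRestrict p)) :=
    Submodule.nontrivial_iff_ne_bot.2 ((Submodule.ne_bot_iff _).2 ⟨⟨v, hv⟩, hf, by simpa using hv0⟩)
  rw [← LinearMap.range_domRestrict, ← (f.domRestrict p).finrank_range_add_finrank_ker]
  exact Nat.lt_add_of_pos_right finrank_pos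

variable {𝕜 E F ι : Type*} [RCLike 𝕜] [NormedAddCommGroup E] [InnerProductSpace 𝕜 E]
  [NormedAddCommGroup F] [InnerProductSpace 𝕜 F]

theorem rank_le_of_forall_orthonormal {r : ℕ}
    (h : ∀ (n : ℕ) (ξ : Fin n → E), Orthonormal 𝕜 ξ → n ≤ r) : Module.rank 𝕜 E ≤ r := by
  refine rank_le fun s hs => ?_
  let b := stdOrthonormalBasis 𝕜 (Submodule.span 𝕜 (s : Set E))
  exact (finrank_span_finset_eq_card hs).ge.trans
    (h _ _ (b.orthonormal.comp_linearIsometry (Submodule.subtypeₗᵢ _)))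

theorem nonempty_linearIsometry_of_rank_le [FiniteDimensional 𝕜 F]
    (h : Module.rank 𝕜 E ≤ finrank 𝕜 F) : Nonempty (E →ₗᵢ[𝕜] F) := by
  have : FiniteDimensional 𝕜 E := rank_lt_aleph0_iff.1 (h.trans_lt Cardinal.natCast_lt_aleph0)
  let b := stdOrthonormalBasis 𝕜 E
  let c := stdOrthonormalBasis 𝕜 F
  obtain ⟨L, -⟩ := exists_linearIsometry_of_orthonormal (b := b.toBasis) (by simp)
    (c.orthonormal.comp _ (Fin.castLE_injective (finrank_le_of_rank_le h)))
  exact ⟨L⟩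

theorem sum_re_inner_starProjection_le [Fintype ι] (V : Submodule 𝕜 E) [FiniteDimensional 𝕜 V]
    {ζ : ι → E} (hζ : Orthonormal 𝕜 ζ) :
    ∑ i, RCLike.re ⟪V.starProjection (ζ i), ζ i⟫_𝕜 ≤ finrank 𝕜 V := by
  let f := stdOrthonormalBasis 𝕜 V
  have hterm (i : ι) :
      RCLike.re ⟪V.starProjection (ζ i), ζ i⟫_𝕜 = ∑ k, ‖⟪ζ i, (f k : E)⟫_𝕜‖ ^ 2 := by
    rw [V.re_inner_starProjection_eq_normSq, ← f.sum_sq_norm_inner_left]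
    simp
  calc ∑ i, RCLike.re ⟪V.starProjection (ζ i), ζ i⟫_𝕜
      = ∑ k, ∑ i, ‖⟪ζ i, (f k : E)⟫_𝕜‖ ^ 2 := by
        rw [Finset.sum_congr rfl fun i _ => hterm i, Finset.sum_comm]
    _ ≤ ∑ k, ‖(f k : E)‖ ^ 2 := Finset.sum_le_sum fun k _ => hζ.sum_inner_products_le _
    _ = finrank 𝕜 V := by
      have hnorm (k) : ‖(f k : E)‖ = 1 := f.orthonormal.1 k
      simp [hnorm]

theorem exists_mem_ne_zero_forall_inner_eq_zero {V : Submodule 𝕜 E} (hV : ¬FiniteDimensional 𝕜 V)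
    (s : Finset E) : ∃ y ∈ V, y ≠ 0 ∧ ∀ x ∈ s, ⟪x, y⟫_𝕜 = 0 := by
  by_contra! hcon
  let T : V →ₗ[𝕜] s → 𝕜 := LinearMap.pi fun x => (innerₛₗ 𝕜 (x : E)).comp V.subtype
  refine hV (.of_injective T (LinearMap.ker_eq_bot.1 (LinearMap.ker_eq_bot'.2 fun y hy => ?_)))
  by_contra hy0
  obtain ⟨x, hx, hxy⟩ := hcon y y.2 (by simpa using hy0)
  exact hxy (congrFun hy ⟨x, hx⟩)

theorem exists_unit_tendsto_inner_zero {V : Submodule 𝕜 E} (hV : ¬FiniteDimensional 𝕜 V) :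
    ∃ y : Finset E → E, (∀ s, y s ∈ V ∧ ‖y s‖ = 1) ∧
      ∀ x, Tendsto (fun s => ⟪x, y s⟫_𝕜) atTop (𝓝 0) := by
  choose z hzV hz0 hz using exists_mem_ne_zero_forall_inner_eq_zero hV
  refine ⟨fun s => ((‖z s‖ : 𝕜)⁻¹) • z s,
    fun s => ⟨V.smul_mem _ (hzV s), norm_smul_inv_norm (hz0 s)⟩, fun x => ?_⟩
  refine tendsto_const_nhds.congr' ?_
  filter_upwards [eventually_ge_atTop {x}] with s hs
  rw [inner_smul_right, hz s x (hs (Finset.mem_singleton_self x)), mul_zero]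

end Dimension

section Separable

variable {𝕜 E F ι : Type*} [RCLike 𝕜] [NormedAddCommGroup E] [InnerProductSpace 𝕜 E]
  [NormedAddCommGroup F] [InnerProductSpace 𝕜 F]
  [TopologicalSpace.SeparableSpace E] [TopologicalSpace.SeparableSpace F]

theorem countable_of_orthonormal {v : ι → E} (hv : Orthonormal 𝕜 v) : Countable ι := by
  refine Pairwise.countable_of_isOpen_disjoint (s := fun i => Metric.ball (v i) (1 / 2))
    (fun i j hij => Metric.ball_disjoint_ball ?_) (fun _ => Metric.isOpen_ball)
    (fun i => ⟨v i, Metric.mem_ball_self (by norm_num)⟩)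
  have h : ‖v i - v j‖ ^ 2 = 2 := by
    rw [norm_sub_sq (𝕜 := 𝕜), hv.2 hij, hv.1 i, hv.1 j]; norm_num
  rw [dist_eq_norm]
  nlinarith only [h, norm_nonneg (v i - v j)]

theorem nonempty_hilbertBasis_nat [CompleteSpace E] (hE : ¬FiniteDimensional 𝕜 E) :
    Nonempty (HilbertBasis ℕ 𝕜 E) := by
  obtain ⟨s, b, -⟩ := exists_hilbertBasis 𝕜 E
  have : Countable s := countable_of_orthonormal b.orthonormal
  have : Infinite s := by
    by_contra hfinite
    have := fintypeOfNotInfinite hfinite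
    exact hE (Module.Finite.of_basis b.toOrthonormalBasis.toBasis)
  obtain ⟨e⟩ : Nonempty (ℕ ≃ s) := nonempty_equiv_of_countable
  refine ⟨.mk (b.orthonormal.comp e e.injective) ?_⟩
  rw [e.surjective.range_comp]
  exact b.dense_span.ge

theorem nonempty_linearIsometryEquiv_of_separable [CompleteSpace E] [CompleteSpace F]
    (hE : ¬FiniteDimensional 𝕜 E) (hF : ¬FiniteDimensional 𝕜 F) : Nonempty (E ≃ₗᵢ[𝕜] F) := by
  obtain ⟨b⟩ := nonempty_hilbertBasis_nat hE
  obtain ⟨c⟩ := nonempty_hilbertBasis_nat hF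
  exact ⟨b.repr.trans c.repr.symm⟩

end Separable

section Representations

variable {A H K ι κ : Type*} [CStarAlgebra A]
  [NormedAddCommGroup H] [InnerProductSpace ℂ H] [CompleteSpace H]
  [NormedAddCommGroup K] [InnerProductSpace ℂ K] [CompleteSpace K]
  {π : CRep A H} {ρ : CRep A K}

namespace CRep

theorem mul_apply (ρ : CRep A K) (a b : A) (x : K) : ρ (a * b) x = ρ a (ρ b x) := by
  rw [map_mul, mul_apply_eq_comp]

theorem inner_apply_right (ρ : CRep A K) (a : A) (x y : K) :
    ⟪x, ρ a y⟫_ℂ = ⟪ρ (star a) x, y⟫_ℂ := by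
  rw [map_star, ContinuousLinearMap.star_eq_adjoint, ContinuousLinearMap.adjoint_inner_left]

theorem inner_apply_apply (ρ : CRep A K) (a b : A) (x y : K) :
    ⟪ρ a x, ρ b y⟫_ℂ = ⟪x, ρ (star a * b) y⟫_ℂ := by
  rw [inner_apply_right ρ (star a * b), star_mul, star_star, mul_apply, ← inner_apply_right]

theorem isInducing_coe : IsInducing fun (π : CRep A H) (a : A) (x : H) => π a x := ⟨rfl⟩

theorem continuous_apply_apply (a : A) (x : H) : Continuous fun π : CRep A H => π a x :=
  (continuous_apply x).comp ((continuous_apply a).comp isInducing_coe.continuous)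

theorem map_eq_map_of_ker_le (hker : ∀ a, ρ a = 0 → π a = 0) {a b : A} (h : ρ a = ρ b) :
    π a = π b := by
  rw [← sub_eq_zero, ← map_sub] at h ⊢
  exact hker _ h

/-- The matrix coefficients of a representation at a family of vectors, as a point of a product
of copies of `ℂ`: their convergence is convergence of the Gram matrices of all the families
`ρ a (y i)`. -/
def matrixCoeff (ρ : CRep A K) (y : ι → K) : A → ι → ι → ℂ := fun a i j => ⟪y i, ρ a (y j)⟫_ℂ

theorem continuous_matrixCoeff (ρ : CRep A K) :
    Continuous (ρ.matrixCoeff : (ι → K) → A → ι → ι → ℂ) := by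
  unfold matrixCoeff
  fun_prop

/-- A family of vectors of `π` is approximable in `ρ` if its matrix coefficients are pointwise
limits of those of families of vectors of `ρ`. -/
def Approximable (π : CRep A H) (ρ : CRep A K) (x : ι → H) : Prop :=
  π.matrixCoeff x ∈ closure (Set.range (ρ.matrixCoeff (ι := ι)))

namespace Approximable

theorem of_tendsto {α : Type*} {l : Filter α} [l.NeBot] {x : ι → H} {y : α → ι → K}
    (h : ∀ a i j, Tendsto (fun t => ⟪y t i, ρ a (y t j)⟫_ℂ) l (𝓝 ⟪x i, π a (x j)⟫_ℂ)) :
    π.Approximable ρ x :=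
  mem_closure_of_tendsto (f := fun t => ρ.matrixCoeff (y t))
    (tendsto_pi_nhds.2 fun a => tendsto_pi_nhds.2 fun i => tendsto_pi_nhds.2 fun j => h a i j)
    (.of_forall fun t => Set.mem_range_self (y t))

theorem exists_tendsto {x : ι → H} (h : π.Approximable ρ x) : ∃ l : Filter (ι → K), l.NeBot ∧
    ∀ a i j, Tendsto (fun y => ⟪y i, ρ a (y j)⟫_ℂ) l (𝓝 ⟪x i, π a (x j)⟫_ℂ) := by
  obtain ⟨l, hl, h⟩ := mem_closure_range_iff_exists_tendsto.1 h
  exact ⟨l, hl, fun a i j => ((h.apply_nhds a).apply_nhds i).apply_nhds j⟩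

theorem comp {x : ι → H} (h : π.Approximable ρ x) (e : κ → ι) :
    π.Approximable ρ (x ∘ e) := by
  obtain ⟨l, _, hl⟩ := h.exists_tendsto
  exact of_tendsto (y := fun y => y ∘ e) fun a i j => hl a (e i) (e j)

theorem isClosed_setOf : IsClosed {x : ι → H | π.Approximable ρ x} :=
  isClosed_closure.preimage π.continuous_matrixCoeff

theorem linearCombination {x : ι → H} (h : π.Approximable ρ x) :
    π.Approximable ρ (Finsupp.linearCombination ℂ fun p : A × ι => π p.1 (x p.2)) := by
  obtain ⟨l, _, hl⟩ := h.exists_tendsto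
  refine of_tendsto (l := l)
    (y := fun y => Finsupp.linearCombination ℂ fun p : A × ι => ρ p.1 (y p.2)) fun a c d => ?_
  simp only [Finsupp.linearCombination_apply, Finsupp.sum, map_sum, map_smul, sum_inner, inner_sum,
    inner_smul_left, inner_smul_right, Finset.mul_sum, ← mul_apply, inner_apply_apply]
  exact tendsto_finsetSum _ fun p _ => tendsto_finsetSum _ fun q _ =>
    ((hl _ _ _).const_mul _).const_mul _

theorem id_of_generating {x : ι → H} (h : π.Approximable ρ x)
    (hx : ∀ v, (∀ a i, ⟪π a (x i), v⟫_ℂ = 0) → v = 0) : π.Approximable ρ (id : H → H) := by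
  let L := Finsupp.linearCombination ℂ fun p : A × ι => π p.1 (x p.2)
  have hdense : Dense (Set.range L) := by
    refine (Submodule.dense_iff_topologicalClosure_eq_top (s := L.range)).2 ?_
    refine Submodule.topologicalClosure_eq_top_iff.2 ((Submodule.eq_bot_iff _).2 fun v hv => ?_)
    refine hx v fun a i => (Submodule.mem_orthogonal _ v).1 hv _ ⟨Finsupp.single (a, i) 1, ?_⟩
    simp [L]
  have hpi : Set.univ.pi (fun _ : H => Set.range L) ⊆ {z | π.Approximable ρ z} := by
    intro z hz
    choose c hc using fun v => hz v trivial
    exact (funext hc : L ∘ c = z) ▸ h.linearCombination.comp c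
  exact isClosed_setOf.closure_subset_iff.2 hpi (dense_pi _ (fun _ _ => hdense) _)

theorem mem_closure (h : π.Approximable ρ (id : H → H)) (e : K ≃ₗᵢ[ℂ] H) :
    π ∈ closure {κ : CRep A H | ∃ u : K ≃ₗᵢ[ℂ] H, ∀ (a : A) (x : K), κ a (u x) = u (ρ a x)} := by
  obtain ⟨l, _, hl⟩ := h.exists_tendsto
  obtain ⟨u, hu⟩ := exists_linearIsometryEquiv_tendsto (l := l) e
    (g := fun p : A × H => π p.1 p.2) (h := fun y p => ρ p.1 (y p.2)) fun p q => by
      simpa only [← mul_apply, inner_apply_apply] using! hl (star p.1 * q.1) p.2 q.2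
  have hu_one (v : H) := hu (1, v)
  simp only [map_one, one_apply_eq_self] at hu_one
  let κ (p) : CRep A H := (u p).conjStarAlgEquiv.toStarAlgHom.comp ρ
  have : ((atTop : Filter (Finset (A × H))).curry l).NeBot := neBot_curry
  refine mem_closure_of_tendsto (f := κ) (b := (atTop : Filter (Finset (A × H))).curry l)
    ?_ (.of_forall fun p => ⟨u p, fun a x => ?_⟩)
  · refine isInducing_coe.tendsto_nhds_iff.2
      (tendsto_pi_nhds.2 fun a => tendsto_pi_nhds.2 fun v => ?_)
    have hdiff : Tendsto (fun p => κ p a v - u p (ρ a (p.2 v))) (atTop.curry l) (𝓝 0) := by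
      refine squeeze_zero_norm (a := fun p => ‖ρ a‖ * ‖v - u p (p.2 v)‖) (fun p => ?_) ?_
      · calc ‖κ p a v - u p (ρ a (p.2 v))‖
          _ = ‖ρ a ((u p).symm v - p.2 v)‖ := by
              change ‖u p (ρ a ((u p).symm v)) - _‖ = _
              rw [← map_sub, ← map_sub, LinearIsometryEquiv.norm_map]
          _ ≤ ‖ρ a‖ * ‖(u p).symm v - p.2 v‖ := (ρ a).le_opNorm _
          _ = ‖ρ a‖ * ‖v - u p (p.2 v)‖ := by
              rw [← (u p).norm_map, map_sub, LinearIsometryEquiv.apply_symm_apply]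
      · simpa using ((hu_one v).const_sub v).norm.const_mul ‖ρ a‖
    simpa using hdiff.add (hu (a, v))
  · simp [κ]

end Approximable

end CRep

end Representations

section FiniteRank

open Module

variable {A H K : Type*} [CStarAlgebra A]
  [NormedAddCommGroup H] [InnerProductSpace ℂ H] [CompleteSpace H]
  [NormedAddCommGroup K] [InnerProductSpace ℂ K] [CompleteSpace K]
  {π : CRep A H} {ρ : CRep A K}

theorem crepPrec_iff_mem_closure : CRepPrec π ρ ↔
    ∀ (n : ℕ) (ξ : Fin n → H), Orthonormal ℂ ξ → (fun a i => ⟪π a (ξ i), ξ i⟫_ℂ) ∈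
      closure ((fun (ζ : Fin n → K) a i => ⟪ρ a (ζ i), ζ i⟫_ℂ) '' {ζ | Orthonormal ℂ ζ}) := by
  refine ⟨fun h n ξ hξ => ?_, fun h Ω n ξ hξ ε hε => ?_⟩
  · choose ζ hζ hζΩ using fun p : Finset A × ℕ =>
      h p.1 n ξ hξ (1 / ((p.2 : ℝ) + 1)) Nat.one_div_pos_of_nat
    refine mem_closure_of_tendsto (b := atTop ×ˢ atTop) (f := fun p a i => ⟪ρ a (ζ p i), ζ p i⟫_ℂ)
      (tendsto_pi_nhds.2 fun a => tendsto_pi_nhds.2 fun i => ?_)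
      (.of_forall fun p => ⟨ζ p, hζ p, rfl⟩)
    refine tendsto_iff_norm_sub_tendsto_zero.2 (squeeze_zero' (.of_forall fun _ => norm_nonneg _) ?_
      (tendsto_one_div_add_atTop_nhds_zero_nat.comp tendsto_snd))
    filter_upwards [tendsto_fst.eventually (eventually_ge_atTop ({a} : Finset A))] with p hp
    rw [norm_sub_rev]
    exact (hζΩ p a (hp (Finset.mem_singleton_self a)) i).le
  · have hev : ∀ᶠ φ in 𝓝 (fun a i => ⟪π a (ξ i), ξ i⟫_ℂ), ∀ a ∈ Ω, ∀ i,
        ‖⟪π a (ξ i), ξ i⟫_ℂ - φ a i‖ < ε := by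
      refine (Finset.eventually_all Ω).2 fun a _ => eventually_all.2 fun i => ?_
      have hcont : Continuous fun φ : A → Fin n → ℂ => ‖⟪π a (ξ i), ξ i⟫_ℂ - φ a i‖ := by fun_prop
      exact hcont.continuousAt.eventually_lt_const (by simpa using hε)
    obtain ⟨_, ⟨ζ, hζ, rfl⟩, hζΩ⟩ :=
      ((mem_closure_iff_frequently.1 (h n ξ hξ)).and_eventually hev).exists
    exact ⟨ζ, hζ, hζΩ⟩

theorem exists_maximal_pairwise {α : Type*} (r : α → α → Prop) (hr : ∀ a b, r a b → r b a) :
    ∃ s : Set α, s.Pairwise r ∧ ∀ x, (∀ b ∈ s, r b x) → x ∈ s := by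
  obtain ⟨s, hs⟩ := zorn_subset {s : Set α | s.Pairwise r} fun c hc hchain =>
    ⟨⋃₀ c, (Set.pairwise_sUnion hchain.directedOn).2 hc, fun _ => Set.subset_sUnion_of_mem⟩
  refine ⟨s, hs.prop, fun x hx => ?_⟩
  refine hs.le_of_ge (y := insert x s) ?_ (Set.subset_insert x s) (Set.mem_insert x s)
  exact Set.pairwise_insert.2 ⟨hs.prop, fun b hb _ => ⟨hr _ _ (hx b hb), hx b hb⟩⟩

namespace CRep

theorem map_star_mul_self_eq_zero_iff {a : A} : ρ (star a * a) = 0 ↔ ρ a = 0 := by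
  rw [map_mul, map_star, CStarRing.star_mul_self_eq_zero_iff]

theorem range_mul (ρ : CRep A K) (a b : A) :
    (ρ (a * b)).range = (ρ b).range.map (ρ a).toLinearMap := by
  ext x
  simp

theorem range_mul_le (ρ : CRep A K) (a b : A) : (ρ (a * b)).range ≤ (ρ a).range := by
  rintro _ ⟨x, rfl⟩
  exact ⟨ρ b x, (ρ.mul_apply a b x).symm⟩

/-- A minimal projection of finite rank modulo the kernel of `ρ`: an element `b` such that `ρ b` is
a finite-rank projection, possibly zero, whose corner `ρ b * ρ A * ρ b` consists of scalar multiples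
of `ρ b`. -/
structure IsAtom (ρ : CRep A K) (b : A) : Prop where
  isStarProjection : IsStarProjection (ρ b)
  finiteDimensional : FiniteDimensional ℂ (ρ b).range
  exists_corner_eq_smul : ∀ a, ∃ c : ℂ, ρ (b * a * b) = c • ρ b

theorem exists_minimal_range {g : A} (hg : ρ g ≠ 0) (hfin : FiniteDimensional ℂ (ρ g).range) :
    ∃ h : A, IsSelfAdjoint h ∧ ρ h ≠ 0 ∧ (ρ h).range ≤ (ρ g).range ∧
      ∀ k, (ρ k).range ≤ (ρ h).range → finrank ℂ (ρ k).range < finrank ℂ (ρ h).range →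
        ρ k = 0 := by
  obtain ⟨h, ⟨hh0, hhg⟩, hmin⟩ := exists_minimalFor_of_wellFoundedLT
    (fun k => ρ k ≠ 0 ∧ (ρ k).range ≤ (ρ g).range) (fun k => finrank ℂ (ρ k).range) ⟨g, hg, le_rfl⟩
  have hle := ρ.range_mul_le h (star h)
  have : FiniteDimensional ℂ (ρ h).range := Submodule.finiteDimensional_of_le hhg
  refine ⟨h * star h, .mul_star_self h, ?_, hle.trans hhg, fun k hk hlt => ?_⟩
  · simpa only [map_mul, map_star, ne_eq, CStarRing.mul_star_self_eq_zero_iff] using hh0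
  · by_contra hk0
    exact (hlt.trans_le (Submodule.finrank_mono hle)).not_ge
      (hmin ⟨hk0, (hk.trans hle).trans hhg⟩ (hlt.trans_le (Submodule.finrank_mono hle)).le)

theorem exists_corner_eq_smul_of_minimal {h : A} (hh : ρ h ≠ 0)
    (hfin : FiniteDimensional ℂ (ρ h).range)
    (hmin : ∀ k, (ρ k).range ≤ (ρ h).range → finrank ℂ (ρ k).range < finrank ℂ (ρ h).range →
      ρ k = 0) (a : A) : ∃ c : ℂ, ρ (h * a * h) = c • ρ h := by
  have hinv : ∀ v ∈ (ρ h).range, (ρ (h * a)).toLinearMap v ∈ (ρ h).range := fun v _ =>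
    ρ.range_mul_le h a ⟨v, rfl⟩
  have : Nontrivial (ρ h).range := Submodule.nontrivial_iff_ne_bot.2 fun hbot =>
    hh (ContinuousLinearMap.coe_inj.1 (LinearMap.range_eq_bot.1 hbot))
  obtain ⟨c, hc⟩ := Module.End.exists_eigenvalue ((ρ (h * a)).toLinearMap.restrict hinv)
  obtain ⟨v, hv⟩ := hc.exists_hasEigenvector
  refine ⟨c, ?_⟩
  rw [← sub_eq_zero, ← map_smul, ← map_sub]
  have hk : h * a * h - c • h = (h * a - algebraMap ℂ A c) * h := by
    rw [sub_mul, Algebra.smul_def]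
  refine hmin _ ?_ ?_
  · rw [hk, range_mul, Submodule.map_le_iff_le_comap]
    intro w hw
    simpa [Algebra.algebraMap_eq_smul_one] using
      sub_mem (hinv w hw) ((ρ h).range.smul_mem c hw)
  · rw [hk, range_mul]
    refine finrank_map_lt_of_mem_of_apply_eq_zero v.2 (by simpa using hv.2) ?_
    have : ρ (h * a) v = c • (v : K) := by simpa using congrArg Subtype.val hv.apply_eq_smul
    simpa [Algebra.algebraMap_eq_smul_one, sub_eq_zero] using this

theorem exists_isAtom_range_le {g : A} (hg : ρ g ≠ 0) (hfin : FiniteDimensional ℂ (ρ g).range) :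
    ∃ b, ρ.IsAtom b ∧ ρ b ≠ 0 ∧ (ρ b).range ≤ (ρ g).range := by
  obtain ⟨h, hsa, hh0, hhg, hmin⟩ := exists_minimal_range hg hfin
  have hhfin : FiniteDimensional ℂ (ρ h).range := Submodule.finiteDimensional_of_le hhg
  have hcorner := exists_corner_eq_smul_of_minimal hh0 hhfin hmin
  obtain ⟨c, hc⟩ := hcorner 1
  rw [mul_one] at hc
  have hc0 : c ≠ 0 := by
    rintro rfl
    rw [zero_smul] at hc
    exact hh0 (map_star_mul_self_eq_zero_iff.1 (by rwa [hsa.star_eq]))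
  have hcstar : star c = c := by
    have h := congrArg star hc
    rw [← map_star, star_mul, hsa.star_eq, star_smul, ← map_star, hsa.star_eq, hc] at h
    exact (smul_left_injective ℂ hh0 h).symm
  have hrange : (ρ (c⁻¹ • h)).range = (ρ h).range := by
    rw [map_smul]
    exact LinearMap.range_smul _ _ (inv_ne_zero hc0)
  refine ⟨c⁻¹ • h, ⟨⟨?_, ?_⟩, hrange ▸ hhfin, fun a => ?_⟩, ?_, hrange ▸ hhg⟩
  · rw [IsIdempotentElem, ← map_mul, smul_mul_smul_comm, map_smul, hc, map_smul, smul_smul,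
      mul_assoc, inv_mul_cancel₀ hc0, mul_one]
  · rw [IsSelfAdjoint, ← map_star, star_smul, hsa.star_eq, star_inv₀, hcstar]
  · obtain ⟨d, hd⟩ := hcorner a
    refine ⟨c⁻¹ * d, ?_⟩
    rw [smul_mul_assoc, smul_mul_assoc, mul_smul_comm, map_smul, map_smul, hd, map_smul,
      smul_smul, smul_smul, smul_smul, mul_right_comm]
  · rw [map_smul]
    exact smul_ne_zero (inv_ne_zero hc0) hh0

theorem apply_eq_zero_of_forall_isAtom (hker : ∀ a, ρ a = 0 → π a = 0) {x : H}
    (hx : ∀ b, ρ.IsAtom b → ∀ c, π (b * c) x = 0) {g : A}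
    (hg : FiniteDimensional ℂ (ρ g).range) : π g x = 0 := by
  induction hr : finrank ℂ (ρ g).range using Nat.strong_induction_on generalizing g with
  | _ r ih =>
    by_cases hg0 : ρ g = 0
    · rw [hker g hg0, zero_apply]
    obtain ⟨b, hb, hb0, hbg⟩ := exists_isAtom_range_le hg0 hg
    obtain ⟨y, hy⟩ : ∃ y, ρ b y ≠ 0 := by simpa [ContinuousLinearMap.ext_iff] using hb0
    have hlt : finrank ℂ (ρ ((1 - b) * g)).range < r := by
      rw [range_mul, ← hr]
      refine finrank_map_lt_of_mem_of_apply_eq_zero (hbg ⟨y, rfl⟩) hy ?_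
      have hbb : ρ b (ρ b y) = ρ b y := congrArg (· y) hb.isStarProjection.isIdempotentElem.eq
      simp [hbb]
    have hcompl : π ((1 - b) * g) x = 0 :=
      ih _ hlt (by rw [range_mul]; infer_instance) rfl
    rwa [sub_mul, one_mul, map_sub, sub_apply, hx b hb, sub_zero] at hcompl

theorem apply_eq_zero_of_maximal_isAtom (hker : ∀ a, ρ a = 0 → π a = 0)
    {B : Set {b // ρ.IsAtom b}}
    (hB : ∀ b' : {b // ρ.IsAtom b}, (∀ b ∈ B, ∀ a, ρ (b * a * b') = 0) → b' ∈ B) {x : H}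
    (hx : ∀ b ∈ B, ∀ c, π (b * c) x = 0) {g : A} (hg : FiniteDimensional ℂ (ρ g).range) :
    π g x = 0 := by
  refine apply_eq_zero_of_forall_isAtom hker (fun b' hb' c => ?_) hg
  by_cases hmem : ∀ b ∈ B, ∀ a, ρ (b * a * b') = 0
  · exact hx _ (hB ⟨b', hb'⟩ hmem) c
  push Not at hmem
  obtain ⟨b, hb, a, hv⟩ := hmem
  obtain ⟨μ, hμ⟩ := hb'.exists_corner_eq_smul (star a * star (b : A) * (b * a))
  have hvv : ρ (star (b * a * b') * (b * a * b')) = ρ (μ • b') := by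
    rw [map_smul, ← hμ, star_mul, star_mul]
    simp only [map_mul, map_star, hb'.isStarProjection.isSelfAdjoint.star_eq, mul_assoc]
  have hμ0 : μ ≠ 0 := by
    rintro rfl
    exact hv (map_star_mul_self_eq_zero_iff.1 (by rw [hvv, zero_smul, map_zero]))
  have hv0 : π (b * a * b') (π c x) = 0 := by
    rw [← π.mul_apply, mul_assoc, mul_assoc, hx b hb]
  have h := congrArg (· (π c x)) (map_eq_map_of_ker_le hker hvv)
  simp only [π.mul_apply _ (b * a * b'), hv0, map_zero, map_smul, smul_apply] at h
  rw [π.mul_apply]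
  exact (smul_eq_zero.1 h.symm).resolve_left hμ0

theorem apply_of_mem_range {b : A} (hb : IsStarProjection (π b)) {y : H} (hy : y ∈ (π b).range) :
    π b y = y := by
  obtain ⟨z, rfl⟩ := hy
  exact congrArg (· z) hb.isIdempotentElem.eq

theorem inner_apply_eq_inner_mul_apply {b : A} (hb : IsStarProjection (π b)) {y : H}
    (hy : y ∈ (π b).range) (a : A) (z : H) : ⟪y, π a z⟫_ℂ = ⟪y, π (b * a) z⟫_ℂ := by
  rw [mul_apply, inner_apply_right π b, map_star, hb.isSelfAdjoint.star_eq,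
    apply_of_mem_range hb hy]

theorem inner_apply_eq_inner_corner_apply {b b' : A} (hb : IsStarProjection (π b))
    (hb' : IsStarProjection (π b')) {y y' : H} (hy : y ∈ (π b).range) (hy' : y' ∈ (π b').range)
    (a : A) : ⟪y, π a y'⟫_ℂ = ⟪y, π (b * a * b') y'⟫_ℂ := by
  rw [inner_apply_eq_inner_mul_apply hb hy, mul_apply π (b * a), apply_of_mem_range hb' hy']

theorem inner_apply_eq_mul_inner {a b : A} {c : ℂ} (hb : IsStarProjection (π b))
    (hc : π (b * a * b) = c • π b) {y y' : H} (hy : y ∈ (π b).range) (hy' : y' ∈ (π b).range) :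
    ⟪y, π a y'⟫_ℂ = c * ⟪y, y'⟫_ℂ := by
  rw [inner_apply_eq_inner_corner_apply hb hb hy hy', hc, smul_apply, inner_smul_right,
    apply_of_mem_range hb hy']

theorem isStarProjection_of_ker_le (hker : ∀ a, ρ a = 0 → π a = 0) {b : A}
    (hb : IsStarProjection (ρ b)) : IsStarProjection (π b) where
  isIdempotentElem := by
    rw [IsIdempotentElem, ← map_mul]
    exact map_eq_map_of_ker_le hker (by rw [map_mul, hb.isIdempotentElem.eq])
  isSelfAdjoint := by
    rw [IsSelfAdjoint, ← map_star]
    exact map_eq_map_of_ker_le hker (by rw [map_star, hb.isSelfAdjoint.star_eq])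

end CRep

namespace CRepPrec

theorem map_eq_zero (h : CRepPrec π ρ) {a : A} (ha : ρ a = 0) : π a = 0 := by
  by_contra hne
  obtain ⟨x, hx⟩ : ∃ x, π a x ≠ 0 := by simpa [ContinuousLinearMap.ext_iff] using hne
  have hx0 : x ≠ 0 := by
    rintro rfl
    exact hx (map_zero _)
  let e : H := (‖x‖ : ℂ)⁻¹ • x
  let S : Set (A → Fin 1 → ℂ) := {φ | φ (star a * a) 0 = 0}
  have hS : IsClosed S := isClosed_eq (by fun_prop) continuous_const
  have hsub : (fun (ζ : Fin 1 → K) a i => ⟪ρ a (ζ i), ζ i⟫_ℂ) '' {ζ | Orthonormal ℂ ζ} ⊆ S := by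
    rintro _ ⟨ζ, -, rfl⟩
    simp [S, ha]
  have he : Orthonormal ℂ fun _ : Fin 1 => e :=
    ⟨fun _ => norm_smul_inv_norm hx0, Subsingleton.pairwise⟩
  have hmem : ⟪π (star a * a) e, e⟫_ℂ = 0 :=
    closure_minimal hsub hS (crepPrec_iff_mem_closure.1 h 1 _ he)
  rw [inner_eq_zero_symm, ← CRep.inner_apply_apply, inner_self_eq_zero, map_smul] at hmem
  exact hx ((smul_eq_zero.1 hmem).resolve_left (by simpa using hx0))

theorem rank_range_le (h : CRepPrec π ρ) {b : A} (hb : IsStarProjection (ρ b))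
    [FiniteDimensional ℂ (ρ b).range] :
    Module.rank ℂ (π b).range ≤ finrank ℂ (ρ b).range := by
  have hπb := CRep.isStarProjection_of_ker_le (fun a => h.map_eq_zero) hb
  have hproj : ρ b = (ρ b).range.starProjection := by
    obtain ⟨_, hproj⟩ := isStarProjection_iff_eq_starProjection_range.1 hb
    exact hproj
  refine rank_le_of_forall_orthonormal fun n ξ hξ => ?_
  let S : Set (A → Fin n → ℂ) := {φ | ∑ i, RCLike.re (φ b i) ≤ finrank ℂ (ρ b).range}
  have hS : IsClosed S := isClosed_le (by fun_prop) continuous_const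
  have hsub : (fun (ζ : Fin n → K) a i => ⟪ρ a (ζ i), ζ i⟫_ℂ) '' {ζ | Orthonormal ℂ ζ} ⊆ S := by
    rintro _ ⟨ζ, hζ, rfl⟩
    have hsum := sum_re_inner_starProjection_le (ρ b).range hζ
    rwa [← hproj] at hsum
  have hξH : Orthonormal ℂ fun i => (ξ i : H) := hξ.comp_linearIsometry (Submodule.subtypeₗᵢ _)
  have hmem : ∑ i, RCLike.re ⟪π b (ξ i), (ξ i : H)⟫_ℂ ≤ finrank ℂ (ρ b).range :=
    closure_minimal hsub hS (crepPrec_iff_mem_closure.1 h n _ hξH)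
  simp only [CRep.apply_of_mem_range hπb (ξ _).2, inner_self_eq_norm_sq, hξH.1] at hmem
  simpa using hmem

theorem nonempty_linearIsometry_range (h : CRepPrec π ρ) {b : A} (hb : IsStarProjection (ρ b))
    [FiniteDimensional ℂ (ρ b).range] : Nonempty ((π b).range →ₗᵢ[ℂ] (ρ b).range) :=
  nonempty_linearIsometry_of_rank_le (h.rank_range_le hb)

end CRepPrec

end FiniteRank

open scoped NNReal

theorem weakDual_tendsto_iff {𝕜 E α : Type*} [CommSemiring 𝕜] [TopologicalSpace 𝕜]
    [ContinuousAdd 𝕜] [ContinuousConstSMul 𝕜 𝕜] [AddCommMonoid E] [Module 𝕜 E]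
    [TopologicalSpace E] {l : Filter α} {f : α → WeakDual 𝕜 E} {φ : WeakDual 𝕜 E} :
    Tendsto f l (𝓝 φ) ↔ ∀ a, Tendsto (fun t => f t a) l (𝓝 (φ a)) :=
  tendsto_iff_forall_eval_tendsto_topDualPairing

theorem exists_re_apply_nonpos_of_notMem {E : Type*} [AddCommGroup E] [Module ℂ E]
    [TopologicalSpace E] {S : Submodule ℝ≥0 (WeakDual ℂ E)}
    (hclosed : IsClosed (S : Set (WeakDual ℂ E))) {φ : WeakDual ℂ E} (hφ : φ ∉ S) :
    ∃ s : E, (∀ ψ ∈ S, (ψ s).re ≤ 0) ∧ 0 < (φ s).re := by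
  have hconv : Convex ℝ (E := WeakBilin (topDualPairing ℂ E)) (S : Set (WeakDual ℂ E)) :=
    fun ψ hψ χ hχ a b ha hb _ =>
      S.add_mem (S.smul_mem (⟨a, ha⟩ : ℝ≥0) hψ) (S.smul_mem (⟨b, hb⟩ : ℝ≥0) hχ)
  have hsep := RCLike.geometric_hahn_banach_closed_point (𝕜 := ℂ)
    (E := WeakBilin (topDualPairing ℂ E)) hconv hclosed hφ
  obtain ⟨f, u, hS, hu⟩ := hsep
  obtain ⟨s, hs⟩ := LinearMap.dualEmbedding_surjective (topDualPairing ℂ E) f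
  have hf (ψ : WeakDual ℂ E) : f ψ = ψ s := by
    rw [← hs]
    rfl
  have hSs : ∀ ψ ∈ S, (ψ s).re < u := fun ψ hψ => hf ψ ▸ hS ψ hψ
  have hu_pos : 0 < u := hSs 0 S.zero_mem
  refine ⟨s, fun ψ hψ => ?_, hu_pos.trans (hf φ ▸ hu)⟩
  by_contra! hpos
  have h : u / (ψ s).re * (ψ s).re < u := by
    have := hSs _ (S.smul_mem (⟨u / (ψ s).re, by positivity⟩ : ℝ≥0) hψ)
    rwa [← Complex.re_ofReal_mul]
  rw [div_mul_cancel₀ _ hpos.ne'] at h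
  exact h.false

section EssentialFunctionals

variable {A H K : Type*} [CStarAlgebra A]
  [NormedAddCommGroup H] [InnerProductSpace ℂ H] [CompleteSpace H]
  [NormedAddCommGroup K] [InnerProductSpace ℂ K] [CompleteSpace K]
  {π : CRep A H} {ρ : CRep A K}

namespace CRep

theorem norm_inner_apply_le (ρ : CRep A K) (y : K) (a : A) :
    ‖⟪y, ρ a y⟫_ℂ‖ ≤ ‖y‖ * ‖y‖ * ‖a‖ :=
  calc ‖⟪y, ρ a y⟫_ℂ‖
    _ ≤ ‖y‖ * (‖ρ a‖ * ‖y‖) := (norm_inner_le_norm _ _).trans (by gcongr; exact (ρ a).le_opNorm y)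
    _ ≤ ‖y‖ * (‖a‖ * ‖y‖) := by gcongr; exact NonUnitalStarAlgHom.norm_apply_le ρ a
    _ = ‖y‖ * ‖y‖ * ‖a‖ := by ring

/-- The positive functional `a ↦ ⟪y, ρ a y⟫` attached to a vector `y`. -/
def vectorFunctional (ρ : CRep A K) (y : K) : WeakDual ℂ A :=
  StrongDual.toWeakDual <| LinearMap.mkContinuous
    { toFun := fun a => ⟪y, ρ a y⟫_ℂ
      map_add' := by simp
      map_smul' := by simp } (‖y‖ * ‖y‖) (ρ.norm_inner_apply_le y)

theorem vectorFunctional_apply (ρ : CRep A K) (y : K) (a : A) :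
    ρ.vectorFunctional y a = ⟪y, ρ a y⟫_ℂ := rfl

theorem norm_vectorFunctional_le (ρ : CRep A K) (y : K) :
    ‖WeakDual.toStrongDual (ρ.vectorFunctional y)‖ ≤ ‖y‖ * ‖y‖ :=
  LinearMap.mkContinuous_norm_le _ (mul_self_nonneg _) (ρ.norm_inner_apply_le y)

theorem tendsto_inner_apply_snd_curry {α : Type*} {l : Filter α} {m : Filter K}
    (hm : ∀ x, Tendsto (fun y => ⟪x, y⟫_ℂ) m (𝓝 0)) (ρ : CRep A K) (f : α → K) (a : A) :
    Tendsto (fun p : α × K => ⟪f p.1, ρ a p.2⟫_ℂ) (l.curry m) (𝓝 0) :=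
  Tendsto.curry (f := fun t y => ⟪f t, ρ a y⟫_ℂ) <| .of_forall fun t => by
    simpa only [inner_apply_right] using hm (ρ (star a) (f t))

theorem tendsto_inner_snd_apply_curry {α : Type*} {l : Filter α} {m : Filter K}
    (hm : ∀ x, Tendsto (fun y => ⟪x, y⟫_ℂ) m (𝓝 0)) (ρ : CRep A K) (f : α → K) (a : A) :
    Tendsto (fun p : α × K => ⟪p.2, ρ a (f p.1)⟫_ℂ) (l.curry m) (𝓝 0) := by
  simpa only [inner_apply_right ρ (star a), star_star, inner_conj_symm, star_zero,
    RCLike.star_def] using (tendsto_inner_apply_snd_curry hm ρ f (star a)).star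

/-- The essential functionals of `ρ`: the limits of the vector functionals of `ρ` along filters of
vectors which converge weakly to zero. They form a closed convex cone. -/
def essentialFunctionals (ρ : CRep A K) : Submodule ℝ≥0 (WeakDual ℂ A) where
  carrier := {φ | ∃ l : Filter K, l.NeBot ∧ (∀ x, Tendsto (fun y => ⟪x, y⟫_ℂ) l (𝓝 0)) ∧
    ∀ a, Tendsto (fun y => ⟪y, ρ a y⟫_ℂ) l (𝓝 (φ a))}
  zero_mem' := by
    refine ⟨pure 0, inferInstance, fun x => ?_, fun a => ?_⟩
    · simpa only [inner_zero_right] using tendsto_pure_nhds (fun y => ⟪x, y⟫_ℂ) 0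
    · simpa only [inner_zero_left] using! tendsto_pure_nhds (fun y => ⟪y, ρ a y⟫_ℂ) 0
  smul_mem' := by
    rintro c φ ⟨l, hl, hweak, hφ⟩
    have hcc : (√c : ℂ) * √c = (c : ℝ) := by
      rw [← Complex.ofReal_mul, Real.mul_self_sqrt c.coe_nonneg]
    refine ⟨l.map fun y => (√c : ℂ) • y, hl.map _, fun x => tendsto_map'_iff.2 ?_,
      fun a => tendsto_map'_iff.2 ?_⟩
    · simpa only [Function.comp_def, inner_smul_right, mul_zero] using (hweak x).const_mul (√c : ℂ)
    · simpa only [Function.comp_def, map_smul, inner_smul_right, inner_smul_left,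
        Complex.conj_ofReal, ← mul_assoc, hcc] using! (hφ a).const_mul ((c : ℝ) : ℂ)
  add_mem' := by
    rintro φ ψ ⟨l, hl, hlweak, hφ⟩ ⟨m, hm, hmweak, hψ⟩
    have : (l.curry m).NeBot := neBot_curry
    have hfst : Tendsto Prod.fst (l.curry m) l := tendsto_fst.mono_left curry_le_prod
    have hsnd : Tendsto Prod.snd (l.curry m) m := tendsto_snd.mono_left curry_le_prod
    have hcross := tendsto_inner_apply_snd_curry (l := l) hmweak ρ id
    have hcross' := tendsto_inner_snd_apply_curry (l := l) hmweak ρ id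
    refine ⟨(l.curry m).map fun p => p.1 + p.2, inferInstance, fun x => tendsto_map'_iff.2 ?_,
      fun a => tendsto_map'_iff.2 ?_⟩
    · simpa only [Function.comp_def, inner_add_right, add_zero] using
        ((hlweak x).comp hfst).add ((hmweak x).comp hsnd)
    · simpa only [Function.comp_def, map_add, inner_add_right, inner_add_left, add_zero, zero_add]
        using! (((hφ a).comp hfst).add (hcross' a)).add ((hcross a).add ((hψ a).comp hsnd))

theorem mem_essentialFunctionals_iff {φ : WeakDual ℂ A} : φ ∈ ρ.essentialFunctionals ↔
    ∃ l : Filter K, l.NeBot ∧ (∀ x, Tendsto (fun y => ⟪x, y⟫_ℂ) l (𝓝 0)) ∧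
      ∀ a, Tendsto (fun y => ⟪y, ρ a y⟫_ℂ) l (𝓝 (φ a)) := Iff.rfl

theorem isClosed_essentialFunctionals (ρ : CRep A K) :
    IsClosed (ρ.essentialFunctionals : Set (WeakDual ℂ A)) := by
  have hpre : (ρ.essentialFunctionals : Set (WeakDual ℂ A)) =
      (fun φ => ((0 : K → ℂ), φ)) ⁻¹'
        closure (Set.range fun y : K => (fun x => ⟪x, y⟫_ℂ, ρ.vectorFunctional y)) := by
    ext φ
    simp only [Set.mem_preimage, mem_closure_range_iff_exists_tendsto, Prod.tendsto_iff,
      tendsto_pi_nhds, weakDual_tendsto_iff]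
    rfl
  exact hpre ▸ isClosed_closure.preimage (by fun_prop)

theorem exists_mem_essentialFunctionals_le_re {V : Submodule ℂ K} (hV : ¬FiniteDimensional ℂ V)
    {s : A} {u : ℝ} (h : ∀ y ∈ V, u * ‖y‖ ^ 2 ≤ (⟪y, ρ s y⟫_ℂ).re) :
    ∃ φ ∈ ρ.essentialFunctionals, u ≤ (φ s).re := by
  obtain ⟨y, hy, hweak⟩ := exists_unit_tendsto_inner_zero hV
  let l := Ultrafilter.of (atTop : Filter (Finset K))
  have hball : ∀ t, ρ.vectorFunctional (y t) ∈
      WeakDual.toStrongDual ⁻¹' Metric.closedBall (0 : StrongDual ℂ A) 1 := fun t => by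
    simpa [(hy t).2] using! ρ.norm_vectorFunctional_le (y t)
  obtain ⟨φ, -, hφ⟩ := (WeakDual.isCompact_closedBall (0 : StrongDual ℂ A) 1).ultrafilter_le_nhds
    (l.map fun t => ρ.vectorFunctional (y t)) (tendsto_principal.2 (.of_forall hball))
  have hlim := weakDual_tendsto_iff.1
    (show Tendsto (fun t => ρ.vectorFunctional (y t)) l (𝓝 φ) from hφ)
  refine ⟨φ, ⟨map y l, inferInstance, fun x => tendsto_map'_iff.2 ?_,
    fun a => tendsto_map'_iff.2 (hlim a)⟩, ?_⟩
  · exact (hweak x).mono_left (Ultrafilter.of_le _)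
  · refine ge_of_tendsto' ((Complex.continuous_re.tendsto _).comp (hlim s)) fun t => ?_
    simpa [(hy t).2] using! h (y t) (hy t).1

theorem re_inner_apply_realPart_sub (ρ : CRep A K) (s : A) (δ : ℝ) (x : K) :
    (⟪x, ρ (realPart s - algebraMap ℝ A δ) x⟫_ℂ).re = (⟪x, ρ s x⟫_ℂ).re - δ * ‖x‖ ^ 2 := by
  have hstar : (⟪x, ρ (star s) x⟫_ℂ).re = (⟪x, ρ s x⟫_ℂ).re := by
    rw [inner_apply_right, star_star]
    exact inner_re_symm (𝕜 := ℂ) _ _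
  have hone : (⟪x, x⟫_ℂ).re = ‖x‖ ^ 2 := inner_self_eq_norm_sq (𝕜 := ℂ) x
  rw [Algebra.algebraMap_eq_smul_one, realPart_apply_coe, ← Complex.coe_smul, ← Complex.coe_smul,
    map_sub, map_smul, map_smul, map_one, sub_apply, smul_apply, smul_apply, one_apply_eq_self,
    map_add, add_apply, inner_sub_right, inner_smul_right, inner_smul_right, Complex.sub_re,
    Complex.re_ofReal_mul, Complex.re_ofReal_mul, inner_add_right, Complex.add_re, hstar, hone]
  ring

theorem re_inner_apply_posPart_nonneg (ρ : CRep A K) (t : A) (x : K) :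
    0 ≤ (⟪x, ρ t⁺ x⟫_ℂ).re := by
  let _ := CStarAlgebra.spectralOrder A
  let _ := CStarAlgebra.spectralOrderedRing A
  obtain ⟨b, hb⟩ := CStarAlgebra.nonneg_iff_eq_star_mul_self.1 (CFC.posPart_nonneg t)
  rw [hb, ← inner_apply_apply]
  exact inner_self_nonneg (𝕜 := ℂ)

theorem re_inner_apply_nonneg_of_range_posPart (ρ : CRep A K) {t : A} (ht : IsSelfAdjoint t)
    {y : K} (hy : y ∈ (ρ t⁺).range) : 0 ≤ (⟪y, ρ t y⟫_ℂ).re := by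
  obtain ⟨z, rfl⟩ := hy
  have h : t * t⁺ = t⁺ * t⁺ := by
    nth_rw 1 [← CFC.posPart_sub_negPart t]
    rw [sub_mul, CFC.negPart_mul_posPart, sub_zero]
  change 0 ≤ (⟪ρ t⁺ z, ρ t (ρ t⁺ z)⟫_ℂ).re
  rw [← mul_apply, h, mul_apply]
  exact ρ.re_inner_apply_posPart_nonneg t _

theorem re_inner_apply_nonpos_of_posPart (π : CRep A H) {t : A} (ht : IsSelfAdjoint t) {x : H}
    (hx : π t⁺ x = 0) : (⟪x, π t x⟫_ℂ).re ≤ 0 := by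
  rw [← CFC.posPart_sub_negPart t, map_sub, sub_apply, hx, zero_sub, inner_neg_right,
    ← CFC.posPart_neg, Complex.neg_re, neg_nonpos]
  exact π.re_inner_apply_posPart_nonneg (-t) x

/-- **Glimm's lemma**. If `s` separated the functional of `x` from the cone, then `((Re s) - δ)⁺`
would have finite rank under `ρ` without annihilating `x`. -/
theorem vectorFunctional_mem_essentialFunctionals {x : H}
    (hx : ∀ g, FiniteDimensional ℂ (ρ g).range → π g x = 0) :
    π.vectorFunctional x ∈ ρ.essentialFunctionals := by
  by_contra hnot
  obtain ⟨s, hS, hs⟩ := exists_re_apply_nonpos_of_notMem ρ.isClosed_essentialFunctionals hnot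
  rw [vectorFunctional_apply] at hs
  obtain ⟨δ, hδ_pos, hδ⟩ : ∃ δ > 0, δ * ‖x‖ ^ 2 < (⟪x, π s x⟫_ℂ).re := by
    refine ⟨(⟪x, π s x⟫_ℂ).re / (‖x‖ ^ 2 + 1), by positivity, ?_⟩
    rw [div_mul_eq_mul_div, div_lt_iff₀ (by positivity)]
    nlinarith
  have ht : IsSelfAdjoint ((realPart s : A) - algebraMap ℝ A δ) :=
    (realPart s).2.sub (.algebraMap A (.all δ))
  by_cases hfin : FiniteDimensional ℂ (ρ ((realPart s : A) - algebraMap ℝ A δ)⁺).range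
  · have h := π.re_inner_apply_nonpos_of_posPart ht (hx _ hfin)
    rw [re_inner_apply_realPart_sub] at h
    linarith
  · obtain ⟨φ, hφ, hφδ⟩ := exists_mem_essentialFunctionals_le_re (s := s) (u := δ) hfin fun y hy =>
      sub_nonneg.1 (ρ.re_inner_apply_realPart_sub s δ y ▸
        ρ.re_inner_apply_nonneg_of_range_posPart ht hy)
    exact absurd (hS φ hφ) (by linarith)

end CRep

end EssentialFunctionals

section Approximation

variable {A H K ι κ : Type*} [CStarAlgebra A]
  [NormedAddCommGroup H] [InnerProductSpace ℂ H] [CompleteSpace H]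
  [NormedAddCommGroup K] [InnerProductSpace ℂ K] [CompleteSpace K]
  {π : CRep A H} {ρ : CRep A K}

namespace CRep

theorem inner_apply_eq_zero_symm {x y : H} (h : ∀ a, ⟪x, π a y⟫_ℂ = 0) (a : A) :
    ⟪y, π a x⟫_ℂ = 0 := by
  rw [inner_apply_right, inner_eq_zero_symm]
  exact h (star a)

theorem inner_apply_linearIsometry (hker : ∀ a, ρ a = 0 → π a = 0) {B : Set {b // ρ.IsAtom b}}
    (hB : B.Pairwise fun b b' => ∀ a, ρ (b * a * b') = 0)
    (U : ∀ b : B, (π (b : A)).range →ₗᵢ[ℂ] (ρ (b : A)).range) (a : A) (b b' : B)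
    (y : (π (b : A)).range) (y' : (π (b' : A)).range) :
    ⟪(U b y : K), ρ a (U b' y')⟫_ℂ = ⟪(y : H), π a y'⟫_ℂ := by
  have hρ (b : B) := b.1.2.isStarProjection
  have hπ (b : B) := isStarProjection_of_ker_le hker (hρ b)
  obtain rfl | hne := eq_or_ne b b'
  · obtain ⟨c, hc⟩ := b.1.2.exists_corner_eq_smul a
    have hc' : π (b * a * b) = c • π b := by
      rw [← map_smul] at hc ⊢
      exact map_eq_map_of_ker_le hker hc
    rw [inner_apply_eq_mul_inner (hρ b) hc (U b y).2 (U b y').2,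
      inner_apply_eq_mul_inner (hπ b) hc' y.2 y'.2]
    exact congrArg (c * ·) ((U b).inner_map_map y y')
  · have h0 := hB b.2 b'.2 (Subtype.coe_injective.ne hne) a
    rw [inner_apply_eq_inner_corner_apply (hρ b) (hρ b') (U b y).2 (U b' y').2,
      inner_apply_eq_inner_corner_apply (hπ b) (hπ b') y.2 y'.2, h0, hker _ h0]
    simp

namespace Approximable

theorem update [DecidableEq ι] {x : ι → H} (hx : π.Approximable ρ x) {v : H}
    (hv : ∀ g, FiniteDimensional ℂ (ρ g).range → π g v = 0) {j : ι}
    (hxv : ∀ i ≠ j, ∀ a, ⟪x i, π a v⟫_ℂ = 0) : π.Approximable ρ (Function.update x j v) := by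
  obtain ⟨l, _, hl⟩ := hx.exists_tendsto
  obtain ⟨m, _, hweak, hm⟩ :=
    mem_essentialFunctionals_iff.1 (vectorFunctional_mem_essentialFunctionals hv)
  have : (l.curry m).NeBot := neBot_curry
  have hfst : Tendsto Prod.fst (l.curry m) l := tendsto_fst.mono_left curry_le_prod
  have hsnd : Tendsto Prod.snd (l.curry m) m := tendsto_snd.mono_left curry_le_prod
  refine of_tendsto (l := l.curry m) (y := fun p => Function.update p.1 j p.2) fun a i k => ?_
  obtain rfl | hi := eq_or_ne i j
  · obtain rfl | hk := eq_or_ne k i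
    · simpa only [Function.update_self] using! (hm a).comp hsnd
    · simpa only [Function.update_self, Function.update_of_ne hk,
        inner_apply_eq_zero_symm (hxv k hk) a] using
        tendsto_inner_snd_apply_curry hweak ρ (fun y : ι → K => y k) a
  · obtain rfl | hk := eq_or_ne k j
    · simpa only [Function.update_self, Function.update_of_ne hi, hxv i hi a] using
        tendsto_inner_apply_snd_curry hweak ρ (fun y : ι → K => y i) a
    · simpa only [Function.update_of_ne hi, Function.update_of_ne hk] using! (hl a i k).comp hfst

theorem sumElim {x : ι → H} (hx : π.Approximable ρ x) {z : κ → H}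
    (hz : ∀ j g, FiniteDimensional ℂ (ρ g).range → π g (z j) = 0)
    (hxz : ∀ i j a, ⟪x i, π a (z j)⟫_ℂ = 0)
    (hzz : Pairwise fun j k => ∀ a, ⟪z j, π a (z k)⟫_ℂ = 0) :
    π.Approximable ρ (Sum.elim x z) := by
  classical
  have hfin (T : Finset κ) : π.Approximable ρ (Sum.elim x (T.piecewise z 0)) := by
    induction T using Finset.induction_on with
    | empty =>
      obtain ⟨l, _, hl⟩ := hx.exists_tendsto
      refine of_tendsto (l := l) (y := fun y => Sum.elim y 0) ?_
      rintro a (i | i) (j | j)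
      · exact hl a i j
      all_goals simp
    | insert j T _ ih =>
      rw [Finset.piecewise_insert, ← Sum.update_elim_inr]
      refine ih.update (hz j) ?_
      rintro (i | k) hne a
      · exact hxz i j a
      · by_cases hk : k ∈ T
        · simpa [hk] using hzz (by simpa using hne) a
        · simp [hk]
  change Sum.elim x z ∈ {w | π.Approximable ρ w}
  refine isClosed_setOf.mem_of_tendsto (f := fun T : Finset κ => Sum.elim x (T.piecewise z 0))
    (b := atTop) (tendsto_pi_nhds.2 ?_) (.of_forall hfin)
  rintro (i | j)
  · exact tendsto_const_nhds
  · refine tendsto_const_nhds.congr' ?_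
    filter_upwards [eventually_ge_atTop {j}] with T hT
    simp [Finset.singleton_subset_iff.1 hT]

theorem id_of_essential_orthogonal {x : ι → H} (hx : π.Approximable ρ x)
    (hess : ∀ v, (∀ a i, ⟪π a (x i), v⟫_ℂ = 0) →
      ∀ g, FiniteDimensional ℂ (ρ g).range → π g v = 0) : π.Approximable ρ (id : H → H) := by
  obtain ⟨Z, hpairwise, hmax⟩ := exists_maximal_pairwise
    (fun z z' : {v : H // v ≠ 0 ∧ ∀ a i, ⟪π a (x i), v⟫_ℂ = 0} => ∀ a, ⟪(z : H), π a z'⟫_ℂ = 0)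
    fun z z' => inner_apply_eq_zero_symm
  have hxZ (i) (z : Z) (a) : ⟪x i, π a z⟫_ℂ = 0 := by
    rw [inner_apply_right]
    exact z.1.2.2 (star a) i
  have hxZ_approx : π.Approximable ρ (Sum.elim x fun z : Z => (z : H)) :=
    hx.sumElim (fun z => hess z z.1.2.2) hxZ fun z z' hne =>
      hpairwise z.2 z'.2 (Subtype.coe_injective.ne hne)
  refine hxZ_approx.id_of_generating fun v hv => ?_
  by_contra hv0
  have hvx : ∀ a i, ⟪π a (x i), v⟫_ℂ = 0 := fun a i => hv a (.inl i)
  have hvZ : ⟨v, hv0, hvx⟩ ∈ Z := hmax _ fun z hz a => by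
    rw [inner_apply_right]
    exact hv (star a) (.inr ⟨z, hz⟩)
  have hvv := hv 1 (.inr ⟨_, hvZ⟩)
  rw [map_one] at hvv
  exact hv0 (inner_self_eq_zero.1 hvv)

end Approximable

end CRep

namespace CRepPrec

theorem approximable_id (h : CRepPrec π ρ) : π.Approximable ρ (id : H → H) := by
  obtain ⟨B, hpairwise, hmax⟩ := exists_maximal_pairwise
    (fun b b' : {b // ρ.IsAtom b} => ∀ a, ρ (b * a * b') = 0) fun b b' hbb a => by
      have hstar := congrArg star (hbb (star a))
      simpa only [map_mul, map_star, star_mul, star_star, star_zero, mul_assoc,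
        b.2.isStarProjection.isSelfAdjoint.star_eq,
        b'.2.isStarProjection.isSelfAdjoint.star_eq] using hstar
  have hker (a) (ha : ρ a = 0) : π a = 0 := h.map_eq_zero ha
  have hfin (b : B) := b.1.2.finiteDimensional
  let U (b : B) := (h.nonempty_linearIsometry_range b.1.2.isStarProjection).some
  let x (p : Σ b : B, (π (b : A)).range) : H := p.2
  have hx : π.Approximable ρ x := subset_closure ⟨fun p => (U p.1 p.2 : K), funext fun a =>
    funext fun p => funext fun q =>
      CRep.inner_apply_linearIsometry hker hpairwise U a p.1 q.1 p.2 q.2⟩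
  refine hx.id_of_essential_orthogonal fun v hv g hg =>
    CRep.apply_eq_zero_of_maximal_isAtom hker hmax ?_ hg
  intro b hb c
  have hmem : π (b * c) v ∈ (π (b : A)).range := ⟨π c v, (π.mul_apply b c v).symm⟩
  have horth : ⟪π (star c) (π (b * c) v), v⟫_ℂ = 0 := hv (star c) ⟨⟨b, hb⟩, ⟨_, hmem⟩⟩
  have hproj := CRep.isStarProjection_of_ker_le hker b.2.isStarProjection
  rw [← CRep.inner_apply_right, CRep.inner_apply_eq_inner_mul_apply hproj hmem] at horth
  exact inner_self_eq_zero.1 horth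

end CRepPrec

theorem prec_iff_mem_closure_unitary_conjugates_general (e : K ≃ₗᵢ[ℂ] H) (π : CRep A H)
    (ρ : CRep A K) : CRepPrec π ρ ↔
      π ∈ closure {κ : CRep A H | ∃ u : K ≃ₗᵢ[ℂ] H, ∀ (a : A) (x : K), κ a (u x) = u (ρ a x)} := by
  refine ⟨fun h => h.approximable_id.mem_closure e, fun h => ?_⟩
  refine crepPrec_iff_mem_closure.2 fun n ξ hξ => ?_
  have hcont : Continuous fun (κ : CRep A H) (a : A) (i : Fin n) => ⟪κ a (ξ i), ξ i⟫_ℂ :=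
    continuous_pi fun a => continuous_pi fun i =>
      (CRep.continuous_apply_apply a (ξ i)).inner continuous_const
  refine map_mem_closure hcont h ?_
  rintro κ ⟨u, hu⟩
  refine ⟨fun i => u.symm (ξ i), hξ.comp_linearIsometryEquiv u.symm, ?_⟩
  funext a i
  calc ⟪ρ a (u.symm (ξ i)), u.symm (ξ i)⟫_ℂ
    _ = ⟪u (ρ a (u.symm (ξ i))), u (u.symm (ξ i))⟫_ℂ := (u.inner_map_map _ _).symm
    _ = ⟪κ a (ξ i), ξ i⟫_ℂ := by rw [← hu, u.apply_symm_apply]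

end Approximation

/-- for unital representations `π : A → B(H)` and `ρ : A → B(K)` of a separable
unital C*-algebra on separable infinite-dimensional Hilbert spaces, `π ≺ ρ` if and only if
`π` lies in the point-strong closure of the set of representations on `H` unitarily
equivalent to `ρ`. -/
theorem prec_iff_mem_closure_unitary_conjugates
    {A H K : Type*} [CStarAlgebra A] [TopologicalSpace.SeparableSpace A]
    [NormedAddCommGroup H] [InnerProductSpace ℂ H] [CompleteSpace H]
    [TopologicalSpace.SeparableSpace H]
    [NormedAddCommGroup K] [InnerProductSpace ℂ K] [CompleteSpace K]
    [TopologicalSpace.SeparableSpace K]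
    (hH : ¬ FiniteDimensional ℂ H) (hK : ¬ FiniteDimensional ℂ K)
    (π : CRep A H) (ρ : CRep A K) :
    CRepPrec π ρ ↔
      π ∈ closure {κ : CRep A H |
        ∃ u : K ≃ₗᵢ[ℂ] H, ∀ (a : A) (x : K), κ a (u x) = u (ρ a x)} := by
  obtain ⟨e⟩ := nonempty_linearIsometryEquiv_of_separable hK hH
  exact prec_iff_mem_closure_unitary_conjugates_general e π ρ
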